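/- Define, for k ∈ (0,1), Y(k) = −√(ι₄(k)) and W(k) = (k⁴K(k)(1 − k²) − ι₄(k)(8 − 9k² + k⁴))/(12 ι₄(k)^{3/2}(1 − k²)), where ι₄(k) = (2 − k²)K(k) − 2E(k). Then Y is strictly decreasing on (0,1) and W is strictly increasing on (0,1); moreover Y(k) → 0 and W(k) → −1/√π as k → 0⁺, while Y(k) → −∞ and W(k) → 0 as k → 1⁻. Consequently the parametric curve {(Y(k), W(k)) : k ∈ (0,1)} is the graph of a function W = W_conj^{22−}(Y) strictly decreasing from 0 to −1/√π on Y ∈ (−∞, 0). -/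

import Mathlib

open Real Set Filter Topology

/-- Complete elliptic integral of the first kind. -/
noncomputable def K (k : ℝ) : ℝ :=
  ∫ t in (0:ℝ)..(π/2), 1 / Real.sqrt (1 - k^2 * Real.sin t ^ 2)

/-- Complete elliptic integral of the second kind. -/
noncomputable def E (k : ℝ) : ℝ :=
  ∫ t in (0:ℝ)..(π/2), Real.sqrt (1 - k^2 * Real.sin t ^ 2)

noncomputable def ι₄ (k : ℝ) : ℝ := (2 - k^2) * K k - 2 * E k

noncomputable def Y22m (k : ℝ) : ℝ := -Real.sqrt (ι₄ k)

noncomputable def W22m (k : ℝ) : ℝ :=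
  (k^4 * K k * (1 - k^2) - ι₄ k * (8 - 9 * k^2 + k^4)) /
    (12 * (ι₄ k) ^ ((3:ℝ)/2) * (1 - k^2))

/-! In the parameter `m = k²` every quantity is a combination of the moments
`∫ sin²ʲ t (1 - m sin² t)ˢ dt` over `[0, π/2]`. Their recurrences give Legendre's equation
`(m (1 - m) K')' = K / 4`, the derivative `ι₄' = m K'`, and the factorisation
`ι₄ = m² ∫ sin² cos² / (1 - m sin²)^(3/2)`, which shows both the positivity of `ι₄` and the
behaviour at `k = 0`. The derivative of `W` is a positive multiple of the quadratic form
`K² - (4 - 5 m) K K' - 6 m (1 - m) K'²`. By Legendre's equation this form solves a first order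
linear equation up to a forcing term which is positive as soon as a linear form in `K, K'` is, and
that linear form is treated the same way, twice: an integrating factor `mᵃ (1 - m)ᵇ` makes each of
the three products increasing from `0`. At `k = 1` everything follows from `K → ∞` and
`E ≤ π / 2`. -/

section Calculus

theorem hasDerivAt_intervalIntegral_of_continuousOn {V : Type*} [NormedAddCommGroup V]
    [NormedSpace ℝ V] {F F' : ℝ → ℝ → V} {a b x₀ : ℝ} {s : Set ℝ} (hs : s ∈ 𝓝 x₀)
    (hF : ∀ x ∈ s, ContinuousOn (F x) (uIcc a b))
    (hF' : ContinuousOn (Function.uncurry F') (s ×ˢ uIcc a b))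
    (hderiv : ∀ x ∈ s, ∀ t ∈ uIcc a b, HasDerivAt (fun x ↦ F x t) (F' x t) x) :
    HasDerivAt (fun x ↦ ∫ t in a..b, F x t) (∫ t in a..b, F' x₀ t) x₀ := by
  obtain ⟨c, hc, hcs, hcompact⟩ := local_compact_nhds hs
  obtain ⟨C, hC⟩ := (hcompact.prod isCompact_uIcc).exists_bound_of_continuousOn
    (hF'.mono (prod_mono_left hcs))
  have hF'₀ : ContinuousOn (F' x₀) (uIcc a b) :=
    hF'.comp (f := fun t ↦ (x₀, t)) (by fun_prop) fun t ht ↦ ⟨mem_of_mem_nhds hs, ht⟩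
  have hmeas {f : ℝ → V} (hf : ContinuousOn f (uIcc a b)) :=
    (hf.mono uIoc_subset_uIcc).aestronglyMeasurable (μ := MeasureTheory.volume) measurableSet_uIoc
  refine (intervalIntegral.hasDerivAt_integral_of_dominated_loc_of_deriv_le (bound := fun _ ↦ C)
    hc ?_ (hF x₀ (mem_of_mem_nhds hs)).intervalIntegrable (hmeas hF'₀) ?_
    intervalIntegrable_const ?_).2
  · filter_upwards [hs] with x hx using hmeas (hF x hx)
  · exact .of_forall fun t ht x hx ↦ hC (x, t) ⟨hx, uIoc_subset_uIcc ht⟩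
  · exact .of_forall fun t ht x hx ↦ hderiv x (hcs hx) t (uIoc_subset_uIcc ht)

theorem pos_of_mul_one_sub_mul_deriv_add_mul_pos {f : ℝ → ℝ} {a b : ℝ} (ha : 0 < a)
    (hcont : ContinuousOn f (Ico 0 1)) (hderiv : ∀ m ∈ Ioo (0 : ℝ) 1, ∃ f', HasDerivAt f f' m ∧
      0 < m * (1 - m) * f' + (a * (1 - m) - b * m) * f m) :
    ∀ m ∈ Ioo (0 : ℝ) 1, 0 < f m := by
  have hmono : StrictMonoOn (fun m ↦ m ^ a * (1 - m) ^ b * f m) (Ico 0 1) := by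
    refine strictMonoOn_of_deriv_pos (convex_Ico 0 1) ?_ fun m hm ↦ ?_
    · refine ((continuousOn_id.rpow_const fun m _ ↦ .inr ha.le).mul ?_).mul hcont
      exact ContinuousOn.rpow_const (by fun_prop) fun m hm ↦ .inl (sub_pos.2 hm.2).ne'
    · rw [interior_Ico] at hm
      obtain ⟨f', hf', hpos⟩ := hderiv m hm
      have hm' : 0 < 1 - m := sub_pos.2 hm.2
      have hleft : HasDerivAt (fun m : ℝ ↦ m ^ a) (a * m ^ (a - 1)) m :=
        hasDerivAt_rpow_const (.inl hm.1.ne')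
      have hright : HasDerivAt (fun m : ℝ ↦ (1 - m) ^ b) (-1 * b * (1 - m) ^ (b - 1)) m :=
        ((hasDerivAt_id m).const_sub 1).rpow_const (.inl hm'.ne')
      rw [((hleft.fun_mul hright).fun_mul hf').deriv]
      have hfactor : 0 < m ^ (a - 1) * (1 - m) ^ (b - 1) :=
        mul_pos (rpow_pos_of_pos hm.1 _) (rpow_pos_of_pos hm' _)
      refine (mul_pos hfactor hpos).trans_eq ?_
      rw [rpow_sub_one hm.1.ne', rpow_sub_one hm'.ne']
      have hm₀ := hm.1.ne'
      field_simp
      ring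
  intro m hm
  have hlt := hmono ⟨le_rfl, one_pos⟩ ⟨hm.1.le, hm.2⟩ hm.1
  simp only [zero_rpow ha.ne', zero_mul] at hlt
  have hm' : 0 < 1 - m := sub_pos.2 hm.2
  exact pos_of_mul_pos_right hlt (mul_pos (rpow_pos_of_pos hm.1 a) (rpow_pos_of_pos hm' b)).le

theorem rpow_three_div_two {x : ℝ} (hx : 0 ≤ x) : x ^ ((3 : ℝ) / 2) = √x ^ 3 := by
  rw [rpow_div_two_eq_sqrt _ hx]
  norm_cast

end Calculus

section Graph

variable {α β γ : Type*} [LinearOrder α] [TopologicalSpace α] [OrderTopology α] [DenselyOrdered α]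
  [LinearOrder β] {a b : α} {c : β}

theorem tendsto_atBot_nhdsLT_of_antitoneOn [NoMinOrder β] {g : β → α}
    (hanti : AntitoneOn g (Iio c)) (hmaps : MapsTo g (Iio c) (Ioo a b))
    (hsurj : SurjOn g (Iio c) (Ioo a b)) : Tendsto g atBot (𝓝[<] b) := by
  rw [← tendsto_comp_val_Iio_atBot (a := c)]
  refine (tendsto_Ioo_atTop (f := hmaps.restrict)).1 (tendsto_atBot_atTop_of_antitone
    (fun y z hyz ↦ hanti y.2 z.2 hyz) fun x ↦ ?_)
  obtain ⟨y, hy, hyx⟩ := hsurj x.2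
  exact ⟨⟨y, hy⟩, hyx.ge⟩

theorem tendsto_nhdsLT_nhdsGT_of_antitoneOn [TopologicalSpace β] [OrderTopology β]
    [DenselyOrdered β] {g : β → α}
    (hanti : AntitoneOn g (Iio c)) (hmaps : MapsTo g (Iio c) (Ioo a b))
    (hsurj : SurjOn g (Iio c) (Ioo a b)) : Tendsto g (𝓝[<] c) (𝓝[>] a) := by
  rw [← tendsto_comp_coe_Iio_atTop]
  refine (tendsto_Ioo_atBot (f := hmaps.restrict)).1 (tendsto_atTop_atBot_of_antitone
    (fun y z hyz ↦ hanti y.2 z.2 hyz) fun x ↦ ?_)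
  obtain ⟨y, hy, hyx⟩ := hsurj x.2
  exact ⟨⟨y, hy⟩, hyx.le⟩

theorem exists_strictAntiOn_graph_eq_image [TopologicalSpace β] [OrderTopology β]
    [DenselyOrdered β] [NoMinOrder β] [Preorder γ] {Y : α → β} {W : α → γ} {la lb : Filter γ}
    (hY : StrictAntiOn Y (Ioo a b)) (hbij : BijOn Y (Ioo a b) (Iio c))
    (hW : StrictMonoOn W (Ioo a b)) (hWa : Tendsto W (𝓝[>] a) la) (hWb : Tendsto W (𝓝[<] b) lb) :
    ∃ F : β → γ, StrictAntiOn F (Iio c) ∧ Tendsto F atBot lb ∧ Tendsto F (𝓝[<] c) la ∧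
      (fun k ↦ (Y k, W k)) '' Ioo a b = (fun y ↦ (y, F y)) '' Iio c := by
  have : Nonempty α := ⟨a⟩
  set g := Function.invFunOn Y (Ioo a b)
  have hinv : InvOn g Y (Ioo a b) (Iio c) := hbij.invOn_invFunOn
  have hgbij : BijOn g (Iio c) (Ioo a b) := hbij.symm hinv.symm
  have hganti : StrictAntiOn g (Iio c) := fun y hy z hz hyz ↦
    (hY.lt_iff_gt (hgbij.mapsTo hy) (hgbij.mapsTo hz)).1 (by rwa [hinv.2 hy, hinv.2 hz])
  refine ⟨W ∘ g, hW.comp_strictAntiOn hganti hgbij.mapsTo,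
    hWb.comp (tendsto_atBot_nhdsLT_of_antitoneOn hganti.antitoneOn hgbij.mapsTo hgbij.surjOn),
    hWa.comp (tendsto_nhdsLT_nhdsGT_of_antitoneOn hganti.antitoneOn hgbij.mapsTo hgbij.surjOn), ?_⟩
  rw [← hgbij.image_eq, image_image]
  exact image_congr fun y hy ↦ by simp [hinv.2 hy]

end Graph

section SinMoment

/-- The moments `∫₀^{π/2} sin²ʲ t (1 - m sin² t)ˢ dt`, in terms of which all complete elliptic
integrals and their derivatives are expressed. The third argument is the parameter `m = k²`, not
the modulus `k`. -/
noncomputable def sinMoment (j : ℕ) (s m : ℝ) : ℝ :=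
  ∫ t in (0 : ℝ)..(π / 2), sin t ^ (2 * j) * (1 - m * sin t ^ 2) ^ s

variable {m : ℝ} (j : ℕ) (s : ℝ)

theorem one_sub_mul_sin_sq_pos (hm : m < 1) (t : ℝ) : 0 < 1 - m * sin t ^ 2 := by
  have hcos : 1 - m * sin t ^ 2 = cos t ^ 2 + (1 - m) * sin t ^ 2 := by rw [cos_sq']; ring
  rcases eq_or_ne (sin t) 0 with hsin | hsin
  · simp [hsin]
  · rw [hcos]
    have := sub_pos.2 hm
    positivity

theorem continuous_sinMoment_integrand (hm : m < 1) :
    Continuous fun t ↦ sin t ^ (2 * j) * (1 - m * sin t ^ 2) ^ s :=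
  .mul (by fun_prop) (.rpow_const (by fun_prop) fun t ↦ .inl (one_sub_mul_sin_sq_pos hm t).ne')

theorem intervalIntegrable_sinMoment_integrand (hm : m < 1) :
    IntervalIntegrable (fun t ↦ sin t ^ (2 * j) * (1 - m * sin t ^ 2) ^ s)
      MeasureTheory.volume 0 (π / 2) :=
  (continuous_sinMoment_integrand j s hm).intervalIntegrable _ _

theorem hasDerivAt_sinMoment (hm : m < 1) :
    HasDerivAt (sinMoment j s) (-s * sinMoment (j + 1) (s - 1) m) m := by
  rw [sinMoment, ← intervalIntegral.integral_const_mul]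
  refine hasDerivAt_intervalIntegral_of_continuousOn
    (F' := fun x t ↦ -s * (sin t ^ (2 * (j + 1)) * (1 - x * sin t ^ 2) ^ (s - 1)))
    (Iio_mem_nhds hm) (fun x hx ↦ (continuous_sinMoment_integrand j s hx).continuousOn) ?_ ?_
  · refine continuousOn_const.mul (.mul (by fun_prop) (.rpow_const (by fun_prop) ?_))
    exact fun p hp ↦ .inl (one_sub_mul_sin_sq_pos hp.1 p.2).ne'
  · intro x hx t _
    have hbase : HasDerivAt (fun x ↦ 1 - x * sin t ^ 2) (-sin t ^ 2) x := by
      simpa using ((hasDerivAt_id x).mul_const (sin t ^ 2)).const_sub 1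
    refine ((hbase.rpow_const (.inl (one_sub_mul_sin_sq_pos hx t).ne')).const_mul
      (sin t ^ (2 * j))).congr_deriv ?_
    ring

theorem sinMoment_eq_sub (hm : m < 1) :
    sinMoment j s m = sinMoment j (s - 1) m - m * sinMoment (j + 1) (s - 1) m := by
  simp only [sinMoment]
  rw [← intervalIntegral.integral_const_mul, ← intervalIntegral.integral_sub
    (intervalIntegrable_sinMoment_integrand j _ hm)
    ((intervalIntegrable_sinMoment_integrand (j + 1) _ hm).const_mul m)]
  refine intervalIntegral.integral_congr fun t _ ↦ ?_
  simp only [rpow_sub_one (one_sub_mul_sin_sq_pos hm t).ne']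
  have hpos := (one_sub_mul_sin_sq_pos hm t).ne'
  field_simp
  ring

theorem hasDerivAt_sin_pow_mul_cos_mul_rpow (hm : m < 1) (t : ℝ) :
    HasDerivAt (fun t ↦ sin t ^ (2 * j + 1) * cos t * (1 - m * sin t ^ 2) ^ (s + 1))
      ((2 * j + 1) * (sin t ^ (2 * j) * (1 - m * sin t ^ 2) ^ s)
        - (2 * j + 2 + (2 * j + 2 * s + 3) * m)
          * (sin t ^ (2 * (j + 1)) * (1 - m * sin t ^ 2) ^ s)
        + (2 * j + 2 * s + 4) * m * (sin t ^ (2 * (j + 2)) * (1 - m * sin t ^ 2) ^ s)) t := by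
  have hpos := one_sub_mul_sin_sq_pos hm t
  have hsq : HasDerivAt (fun t ↦ 1 - m * sin t ^ 2) (-(m * (2 * sin t * cos t))) t := by
    simpa using (((hasDerivAt_sin t).fun_pow 2).const_mul m).const_sub 1
  refine ((((hasDerivAt_sin t).fun_pow (2 * j + 1)).fun_mul (hasDerivAt_cos t)).fun_mul
    (hsq.rpow_const (.inl hpos.ne'))).congr_deriv ?_
  rw [add_sub_cancel_right, rpow_add_one hpos.ne', Nat.add_sub_cancel]
  push_cast
  linear_combination (sin t ^ (2 * j) * (1 - m * sin t ^ 2) ^ s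
    * ((2 * j + 1) * (1 - m * sin t ^ 2) - 2 * (s + 1) * m * sin t ^ 2)) * cos_sq' t

theorem sinMoment_recurrence (hm : m < 1) :
    (2 * j + 1) * sinMoment j s m = (2 * j + 2 + (2 * j + 2 * s + 3) * m) * sinMoment (j + 1) s m
      - (2 * j + 2 * s + 4) * m * sinMoment (j + 2) s m := by
  have hint (i : ℕ) (c : ℝ) := (intervalIntegrable_sinMoment_integrand i s hm).const_mul c
  have hboundary := intervalIntegral.integral_eq_sub_of_hasDerivAt
    (fun t _ ↦ hasDerivAt_sin_pow_mul_cos_mul_rpow j s hm t)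
    (((hint j _).sub (hint (j + 1) _)).add (hint (j + 2) _))
  rw [intervalIntegral.integral_add ((hint j _).sub (hint (j + 1) _)) (hint (j + 2) _),
    intervalIntegral.integral_sub (hint j _) (hint (j + 1) _)] at hboundary
  simp only [intervalIntegral.integral_const_mul, cos_pi_div_two, sin_zero, mul_zero, zero_mul,
    zero_pow (Nat.succ_ne_zero _), sub_zero] at hboundary
  rw [← sinMoment, ← sinMoment, ← sinMoment] at hboundary
  linear_combination hboundary

theorem sinMoment_pos (hm : m < 1) : 0 < sinMoment j s m := by
  refine intervalIntegral.intervalIntegral_pos_of_pos_on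
    (intervalIntegrable_sinMoment_integrand j s hm) (fun t ht ↦ ?_) (by positivity)
  have hsin : 0 < sin t := sin_pos_of_pos_of_lt_pi ht.1 (by linarith [ht.2, pi_pos])
  exact mul_pos (pow_pos hsin _) (rpow_pos_of_pos (one_sub_mul_sin_sq_pos hm t) s)

theorem sinMoment_succ_lt (hm : m < 1) : sinMoment (j + 1) s m < sinMoment j s m := by
  rw [← sub_pos, sinMoment, sinMoment, ← intervalIntegral.integral_sub
    (intervalIntegrable_sinMoment_integrand j s hm)
    (intervalIntegrable_sinMoment_integrand (j + 1) s hm)]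
  refine intervalIntegral.intervalIntegral_pos_of_pos_on
    ((intervalIntegrable_sinMoment_integrand j s hm).sub
      (intervalIntegrable_sinMoment_integrand (j + 1) s hm)) (fun t ht ↦ ?_) (by positivity)
  have hsin : 0 < sin t := sin_pos_of_pos_of_lt_pi ht.1 (by linarith [ht.2, pi_pos])
  have hcos : 0 < cos t := cos_pos_of_mem_Ioo ⟨by linarith [ht.1, pi_pos], ht.2⟩
  calc 0 < sin t ^ (2 * j) * (1 - m * sin t ^ 2) ^ s * cos t ^ 2 :=
        mul_pos (mul_pos (pow_pos hsin _) (rpow_pos_of_pos (one_sub_mul_sin_sq_pos hm t) s))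
          (pow_pos hcos 2)
    _ = _ := by rw [cos_sq']; ring

theorem sinMoment_zero_zero : sinMoment 0 s 0 = π / 2 := by simp [sinMoment]

theorem sinMoment_succ_zero :
    sinMoment (j + 1) s 0 = (2 * j + 1) / (2 * j + 2) * sinMoment j s 0 := by
  simpa [sinMoment, mul_add] using integral_sin_pow (a := 0) (b := π / 2) (2 * j)

end SinMoment

section LegendreEquation

/-- The complete elliptic integral of the first kind as a function of the parameter `m = k²`. -/
noncomputable def paramK (m : ℝ) : ℝ := sinMoment 0 (-(1 / 2)) m

/-- The derivative of `paramK`, written as a moment. -/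
noncomputable def paramKDeriv (m : ℝ) : ℝ := 1 / 2 * sinMoment 1 (-(3 / 2)) m

/-- The complete elliptic integral of the second kind as a function of the parameter `m = k²`. -/
noncomputable def paramE (m : ℝ) : ℝ := sinMoment 0 (1 / 2) m

variable {k m : ℝ}

theorem K_eq_paramK (hk : k ^ 2 < 1) : K k = paramK (k ^ 2) := by
  refine intervalIntegral.integral_congr fun t _ ↦ ?_
  have hpos := one_sub_mul_sin_sq_pos hk t
  simp only [mul_zero, pow_zero, one_mul, rpow_neg hpos.le, sqrt_eq_rpow, one_div]

theorem E_eq_paramE : E k = paramE (k ^ 2) := by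
  simp [E, paramE, sinMoment, sqrt_eq_rpow]

theorem paramK_pos (hm : m < 1) : 0 < paramK m := sinMoment_pos _ _ hm

theorem paramKDeriv_pos (hm : m < 1) : 0 < paramKDeriv m :=
  mul_pos (by norm_num) (sinMoment_pos _ _ hm)

theorem hasDerivAt_paramK (hm : m < 1) : HasDerivAt paramK (paramKDeriv m) m := by
  refine (hasDerivAt_sinMoment 0 (-(1 / 2)) hm).congr_deriv ?_
  norm_num [paramKDeriv]

theorem hasDerivAt_paramE (hm : m < 1) :
    HasDerivAt paramE (-(1 / 2) * sinMoment 1 (-(1 / 2)) m) m := by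
  refine (hasDerivAt_sinMoment 0 (1 / 2) hm).congr_deriv ?_
  norm_num

theorem hasDerivAt_paramKDeriv (hm : m < 1) :
    HasDerivAt paramKDeriv (3 / 4 * sinMoment 2 (-(5 / 2)) m) m := by
  refine ((hasDerivAt_sinMoment 1 (-(3 / 2)) hm).const_mul (1 / 2)).congr_deriv ?_
  norm_num
  ring

theorem legendre_equation (hm : m < 1) :
    m * (1 - m) * (3 / 4 * sinMoment 2 (-(5 / 2)) m) + (1 - 2 * m) * paramKDeriv m
      = 1 / 4 * paramK m := by
  have hrec := sinMoment_recurrence 0 (-(5 / 2)) hm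
  have hK := sinMoment_eq_sub 0 (-(1 / 2)) hm
  have hM := sinMoment_eq_sub 0 (-(3 / 2)) hm
  have hM' := sinMoment_eq_sub 1 (-(3 / 2)) hm
  norm_num [paramK, paramKDeriv] at hrec hK hM hM' ⊢
  rw [hK, hM, hM']
  linear_combination (-1 / 4) * hrec

end LegendreEquation

section Iota

/-- The function `ι₄` in terms of the parameter `m = k²`. -/
noncomputable def paramIota (m : ℝ) : ℝ := (2 - m) * paramK m - 2 * paramE m

/-- The integral `∫₀^{π/2} sin² t cos² t (1 - m sin² t)^(-3/2) dt`, which is the quotient `ι₄ / m²`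
without its removable singularity at `m = 0`. -/
noncomputable def paramIotaQuot (m : ℝ) : ℝ := sinMoment 1 (-(3 / 2)) m - sinMoment 2 (-(3 / 2)) m

variable {k m : ℝ}

theorem ι₄_eq_paramIota (hk : k ^ 2 < 1) : ι₄ k = paramIota (k ^ 2) := by
  rw [ι₄, K_eq_paramK hk, E_eq_paramE, paramIota]

theorem paramK_eq_of_recurrence (hm : m < 1) :
    paramK m = (2 - m) * sinMoment 1 (-(3 / 2)) m - m * sinMoment 2 (-(3 / 2)) m := by
  have hrec := sinMoment_recurrence 0 (-(3 / 2)) hm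
  have hK := sinMoment_eq_sub 0 (-(1 / 2)) hm
  norm_num at hrec hK
  rw [paramK, hK, hrec]
  ring

theorem paramIota_eq_sq_mul_paramIotaQuot (hm : m < 1) :
    paramIota m = m ^ 2 * paramIotaQuot m := by
  have hE := sinMoment_eq_sub 0 (1 / 2) hm
  have hM := sinMoment_eq_sub 1 (-(1 / 2)) hm
  norm_num at hE hM
  rw [paramIota, paramE, hE, hM, paramIotaQuot, show sinMoment 0 (-(1 / 2)) m = paramK m from rfl,
    paramK_eq_of_recurrence hm]
  ring

theorem paramIota_eq_mul_paramK_sub (hm : m < 1) :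
    paramIota m = m * (paramK m - 4 * (1 - m) * paramKDeriv m) := by
  rw [paramIota_eq_sq_mul_paramIotaQuot hm, paramK_eq_of_recurrence hm, paramIotaQuot, paramKDeriv]
  ring

theorem hasDerivAt_paramIota (hm : m < 1) : HasDerivAt paramIota (m * paramKDeriv m) m := by
  refine ((((hasDerivAt_id m).const_sub 2).fun_mul (hasDerivAt_paramK hm)).fun_sub
    ((hasDerivAt_paramE hm).const_mul 2)).congr_deriv ?_
  have hM := sinMoment_eq_sub 1 (-(1 / 2)) hm
  norm_num at hM
  rw [hM, paramK_eq_of_recurrence hm, paramKDeriv, id]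
  ring

theorem paramIotaQuot_pos (hm : m < 1) : 0 < paramIotaQuot m :=
  sub_pos.2 (sinMoment_succ_lt 1 _ hm)

theorem hasDerivAt_paramIotaQuot (hm : m < 1) :
    HasDerivAt paramIotaQuot
      (3 / 2 * (sinMoment 2 (-(5 / 2)) m - sinMoment 3 (-(5 / 2)) m)) m := by
  refine ((hasDerivAt_sinMoment 1 (-(3 / 2)) hm).fun_sub
    (hasDerivAt_sinMoment 2 (-(3 / 2)) hm)).congr_deriv ?_
  norm_num
  ring

theorem paramIota_pos (hm : m ∈ Ioo (0 : ℝ) 1) : 0 < paramIota m := by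
  rw [paramIota_eq_sq_mul_paramIotaQuot hm.2]
  exact mul_pos (pow_pos hm.1 2) (paramIotaQuot_pos hm.2)

theorem strictMonoOn_paramIota : StrictMonoOn paramIota (Ioo 0 1) := by
  refine strictMonoOn_of_deriv_pos (convex_Ioo 0 1)
    (fun m hm ↦ (hasDerivAt_paramIota hm.2).continuousAt.continuousWithinAt) fun m hm ↦ ?_
  rw [interior_Ioo] at hm
  rw [(hasDerivAt_paramIota hm.2).deriv]
  exact mul_pos hm.1 (paramKDeriv_pos hm.2)

end Iota

section KDerivBounds

variable {m : ℝ}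

theorem continuousOn_paramK : ContinuousOn paramK (Ico 0 1) := fun _ hm ↦
  (hasDerivAt_paramK hm.2).continuousAt.continuousWithinAt

theorem continuousOn_paramKDeriv : ContinuousOn paramKDeriv (Ico 0 1) := fun _ hm ↦
  (hasDerivAt_paramKDeriv hm.2).continuousAt.continuousWithinAt

theorem two_mul_paramK_lt (hm : m ∈ Ioo (0 : ℝ) 1) :
    2 * paramK m < (8 - 7 * m) * paramKDeriv m := by
  refine sub_pos.1 (pos_of_mul_one_sub_mul_deriv_add_mul_pos (a := 1) (b := -1 / 8)
    (f := fun m ↦ (8 - 7 * m) * paramKDeriv m - 2 * paramK m) one_pos ?_ (fun m hm ↦ ?_) m hm)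
  · have := continuousOn_paramK
    have := continuousOn_paramKDeriv
    fun_prop
  · refine ⟨_, ((((hasDerivAt_id m).const_mul 7).const_sub 8).fun_mul
      (hasDerivAt_paramKDeriv hm.2)).fun_sub ((hasDerivAt_paramK hm.2).const_mul 2), ?_⟩
    have hm₀ := hm.1
    have hK' := paramKDeriv_pos hm.2
    calc 0 < 9 / 8 * m ^ 2 * paramKDeriv m := by positivity
      _ = _ := by
        simp only [id]
        linear_combination -(8 - 7 * m) * legendre_equation hm.2

theorem eight_sub_mul_paramK_lt (hm : m ∈ Ioo (0 : ℝ) 1) :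
    (8 - m) * paramK m < 2 * (16 - 16 * m + m ^ 2) * paramKDeriv m := by
  refine sub_pos.1 (pos_of_mul_one_sub_mul_deriv_add_mul_pos (a := 1) (b := -3 / 2)
    (f := fun m ↦ 2 * (16 - 16 * m + m ^ 2) * paramKDeriv m - (8 - m) * paramK m)
    one_pos ?_ (fun m hm ↦ ?_) m hm)
  · have := continuousOn_paramK
    have := continuousOn_paramKDeriv
    fun_prop
  · refine ⟨_, ((((((hasDerivAt_id m).const_mul 16).const_sub 16).fun_add
      (hasDerivAt_pow 2 m)).const_mul 2).fun_mul (hasDerivAt_paramKDeriv hm.2)).fun_sub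
      (((hasDerivAt_id m).const_sub 8).fun_mul (hasDerivAt_paramK hm.2)), ?_⟩
    have hm₀ := hm.1
    have hlt := sub_pos.2 (two_mul_paramK_lt hm)
    calc 0 < 5 * m * ((8 - 7 * m) * paramKDeriv m - 2 * paramK m) := by positivity
      _ = _ := by
        simp only [id]
        linear_combination -(2 * (16 - 16 * m + m ^ 2)) * legendre_equation hm.2

theorem paramK_quadratic_form_pos (hm : m ∈ Ioo (0 : ℝ) 1) :
    0 < paramK m ^ 2 - (4 - 5 * m) * (paramK m * paramKDeriv m)
      - 6 * (m * (1 - m)) * paramKDeriv m ^ 2 := by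
  refine pos_of_mul_one_sub_mul_deriv_add_mul_pos (a := 1 / 3) (b := 5 / 6)
    (f := fun m ↦ paramK m ^ 2 - (4 - 5 * m) * (paramK m * paramKDeriv m)
      - 6 * (m * (1 - m)) * paramKDeriv m ^ 2) (by norm_num) ?_ (fun m hm ↦ ?_) m hm
  · have := continuousOn_paramK
    have := continuousOn_paramKDeriv
    fun_prop
  · have hK := hasDerivAt_paramK hm.2
    have hK' := hasDerivAt_paramKDeriv hm.2
    have hlin := ((hasDerivAt_id m).const_mul 5).const_sub 4
    have hquad := ((hasDerivAt_id m).fun_mul ((hasDerivAt_id m).const_sub 1)).const_mul 6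
    refine ⟨_, ((hK.fun_pow 2).fun_sub (hlin.fun_mul (hK.fun_mul hK'))).fun_sub
      (hquad.fun_mul (hK'.fun_pow 2)), ?_⟩
    have hpos := mul_pos (paramK_pos hm.2) (sub_pos.2 (eight_sub_mul_paramK_lt hm))
    calc 0 < 1 / 12 * (paramK m
          * (2 * (16 - 16 * m + m ^ 2) * paramKDeriv m - (8 - m) * paramK m)) := by positivity
      _ = _ := by
        simp only [id]
        linear_combination ((4 - 5 * m) * paramK m + 12 * m * (1 - m) * paramKDeriv m)
          * legendre_equation hm.2

end KDerivBounds

section ParamW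

/-- The function `W22m` in terms of the parameter `m = k²`, with the common factor `1 - k²` of its
numerator and denominator cancelled. -/
noncomputable def paramW (m : ℝ) : ℝ :=
  (m ^ 2 * paramK m - (8 - m) * paramIota m) / (12 * √(paramIota m) ^ 3)

variable {m : ℝ}

theorem hasDerivAt_paramW (hm : m ∈ Ioo (0 : ℝ) 1) :
    HasDerivAt paramW (m ^ 2 * (paramK m ^ 2 - (4 - 5 * m) * (paramK m * paramKDeriv m)
      - 6 * (m * (1 - m)) * paramKDeriv m ^ 2) / (4 * √(paramIota m) ^ 5)) m := by
  have hιpos := paramIota_pos hm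
  have := sqrt_pos.2 hιpos
  have hsq := sq_sqrt hιpos.le
  have hι := hasDerivAt_paramIota hm.2
  have hnum := ((hasDerivAt_pow 2 m).fun_mul (hasDerivAt_paramK hm.2)).fun_sub
    (((hasDerivAt_id m).const_sub 8).fun_mul hι)
  have hden := ((hι.sqrt hιpos.ne').fun_pow 3).const_mul 12
  refine (hnum.fun_div hden (by positivity)).congr_deriv ?_
  have hform : (2 * m * paramK m + m ^ 2 * paramKDeriv m
        - (-paramIota m + (8 - m) * (m * paramKDeriv m))) * paramIota m
      - 3 / 2 * (m ^ 2 * paramK m - (8 - m) * paramIota m) * (m * paramKDeriv m)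
      = 3 * m ^ 2 * (paramK m ^ 2 - (4 - 5 * m) * (paramK m * paramKDeriv m)
        - 6 * (m * (1 - m)) * paramKDeriv m ^ 2) := by
    rw [paramIota_eq_mul_paramK_sub hm.2]
    ring
  simp only [id]
  field_simp
  linear_combination 8 * √(paramIota m) ^ 2 * hform + 8 * √(paramIota m) ^ 2
    * (2 * m * paramK m + m ^ 2 * paramKDeriv m + paramIota m - (8 - m) * (m * paramKDeriv m)) * hsq

theorem strictMonoOn_paramW : StrictMonoOn paramW (Ioo 0 1) := by
  refine strictMonoOn_of_deriv_pos (convex_Ioo 0 1)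
    (fun m hm ↦ (hasDerivAt_paramW hm).continuousAt.continuousWithinAt) fun m hm ↦ ?_
  rw [interior_Ioo] at hm
  rw [(hasDerivAt_paramW hm).deriv]
  have := hm.1
  have := paramK_quadratic_form_pos hm
  have := sqrt_pos.2 (paramIota_pos hm)
  positivity

end ParamW

section BehaviourAtZero

variable {m : ℝ}

theorem paramIotaQuot_zero : paramIotaQuot 0 = π / 16 := by
  norm_num [paramIotaQuot, sinMoment_succ_zero, sinMoment_zero_zero]
  ring

theorem hasDerivAt_paramK_sub_mul_paramIotaQuot_zero :
    HasDerivAt (fun m ↦ paramK m - (8 - m) * paramIotaQuot m) (-(3 * π / 16)) 0 := by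
  refine ((hasDerivAt_paramK one_pos).fun_sub (((hasDerivAt_id 0).const_sub 8).fun_mul
    (hasDerivAt_paramIotaQuot one_pos))).congr_deriv ?_
  norm_num [paramKDeriv, paramIotaQuot, sinMoment_succ_zero, sinMoment_zero_zero]
  ring

theorem paramW_eq_slope_div (hm : m ∈ Ioo (0 : ℝ) 1) :
    paramW m = slope (fun m ↦ paramK m - (8 - m) * paramIotaQuot m) 0 m
      / (12 * √(paramIotaQuot m) ^ 3) := by
  have hm₀ := hm.1
  have hpos := sqrt_pos.2 (paramIotaQuot_pos hm.2)
  have hzero : paramK 0 - (8 - 0) * paramIotaQuot 0 = 0 := by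
    rw [paramIotaQuot_zero, paramK, sinMoment_zero_zero]
    ring
  rw [slope_def_field, hzero, paramW, paramIota_eq_sq_mul_paramIotaQuot hm.2,
    sqrt_mul (sq_nonneg m), sqrt_sq hm₀.le]
  field_simp
  ring

theorem tendsto_paramW_zero : Tendsto paramW (𝓝[>] 0) (𝓝 (-1 / √π)) := by
  have hslope := hasDerivAt_iff_tendsto_slope.1 hasDerivAt_paramK_sub_mul_paramIotaQuot_zero
  have hquot : Tendsto paramIotaQuot (𝓝[≠] 0) (𝓝 (π / 16)) := by
    rw [← paramIotaQuot_zero]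
    exact (hasDerivAt_paramIotaQuot one_pos).continuousAt.tendsto.mono_left nhdsWithin_le_nhds
  have hsqrt : √(π / 16) = √π / 4 := by
    rw [sqrt_div pi_pos.le, show (16 : ℝ) = 4 ^ 2 by norm_num, sqrt_sq (by norm_num)]
  have hlim : -(3 * π / 16) / (12 * √(π / 16) ^ 3) = -1 / √π := by
    have := sqrt_pos.2 pi_pos
    rw [hsqrt]
    field_simp
    rw [sq_sqrt pi_pos.le]
    ring
  rw [← hlim]
  refine ((hslope.div ((hquot.sqrt.pow 3).const_mul 12) (by positivity)).mono_left
    (nhdsGT_le_nhdsNE 0)).congr' ?_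
  filter_upwards [Ioo_mem_nhdsGT one_pos] with m hm using (paramW_eq_slope_div hm).symm

end BehaviourAtZero

section BehaviourAtOne

variable {m : ℝ}

theorem mul_cos_div_le_rpow_neg_half (hm : m ∈ Ico (0 : ℝ) 1) (t : ℝ) :
    m * cos t / (2 * (1 - m * sin t)) ≤ (1 - m * sin t ^ 2) ^ (-(1 / 2) : ℝ) := by
  have hbase := one_sub_mul_sin_sq_pos hm.2 t
  have hsqrt := sqrt_pos.2 hbase
  have hlin : 0 < 1 - m * sin t := by nlinarith [sin_le_one t, hm.1, hm.2]
  have hcos : m * cos t ≤ √(1 - m * sin t ^ 2) := by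
    refine le_sqrt_of_sq_le ?_
    rw [mul_pow, cos_sq']
    nlinarith [sq_nonneg (sin t), sin_sq_le_one t, hm.1, hm.2]
  have hfactor : 1 - m * sin t ^ 2 ≤ 2 * (1 - m * sin t) := by
    nlinarith [mul_nonneg hm.1 (sq_nonneg (1 - sin t)), hm.2]
  rw [rpow_neg hbase.le, ← sqrt_eq_rpow, ← one_div, div_le_div_iff₀ (by positivity) hsqrt, one_mul]
  calc m * cos t * √(1 - m * sin t ^ 2) ≤ √(1 - m * sin t ^ 2) * √(1 - m * sin t ^ 2) := by gcongr
    _ = 1 - m * sin t ^ 2 := mul_self_sqrt hbase.le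
    _ ≤ 2 * (1 - m * sin t) := hfactor

theorem neg_log_one_sub_div_two_le_paramK (hm : m ∈ Ico (0 : ℝ) 1) :
    -log (1 - m) / 2 ≤ paramK m := by
  have hderiv (t : ℝ) : HasDerivAt (fun t ↦ -log (1 - m * sin t) / 2)
      (m * cos t / (2 * (1 - m * sin t))) t := by
    have hlin : 0 < 1 - m * sin t := by nlinarith [sin_le_one t, hm.1, hm.2]
    refine (((((hasDerivAt_sin t).const_mul m).const_sub 1).log hlin.ne').fun_neg.div_const
      2).congr_deriv ?_
    field_simp
  have hle := intervalIntegral.sub_le_integral_of_hasDeriv_right_of_le (a := 0) (b := π / 2)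
    (by positivity) (fun t _ ↦ (hderiv t).continuousAt.continuousWithinAt)
    (fun t _ ↦ (hderiv t).hasDerivWithinAt)
    (continuous_sinMoment_integrand 0 (-(1 / 2)) hm.2).continuousOn.integrableOn_Icc
    fun t _ ↦ by simpa using mul_cos_div_le_rpow_neg_half hm t
  simpa [paramK, sinMoment] using hle

theorem tendsto_paramK_one : Tendsto paramK (𝓝[<] 1) atTop := by
  have hsub : Tendsto (fun m : ℝ ↦ 1 - m) (𝓝[<] 1) (𝓝[>] 0) := by
    have hcont : ContinuousWithinAt (fun m : ℝ ↦ 1 - m) (Iio 1) 1 := by fun_prop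
    simpa using hcont.tendsto_nhdsWithin (t := Ioi 0) fun m hm ↦ sub_pos.2 hm
  refine tendsto_atTop_mono' _ ?_ ((tendsto_neg_atBot_atTop.comp
    (tendsto_log_nhdsGT_zero.comp hsub)).atTop_div_const two_pos)
  filter_upwards [Ico_mem_nhdsLT one_pos] with m hm using neg_log_one_sub_div_two_le_paramK hm

theorem paramE_le (hm : m ∈ Ico (0 : ℝ) 1) : paramE m ≤ π / 2 := by
  have hle : paramE m ≤ ∫ _ in (0 : ℝ)..(π / 2), (1 : ℝ) := by
    refine intervalIntegral.integral_mono_on (by positivity)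
      (intervalIntegrable_sinMoment_integrand 0 _ hm.2) intervalIntegrable_const fun t _ ↦ ?_
    rw [mul_zero, pow_zero, one_mul]
    exact rpow_le_one (one_sub_mul_sin_sq_pos hm.2 t).le
      (sub_le_self _ (mul_nonneg hm.1 (sq_nonneg _))) (by norm_num)
  simpa using hle

theorem paramK_sub_pi_le_paramIota (hm : m ∈ Ico (0 : ℝ) 1) : paramK m - π ≤ paramIota m := by
  have := mul_nonneg (sub_pos.2 hm.2).le (paramK_pos hm.2).le
  rw [paramIota]
  linarith [paramE_le hm]

theorem tendsto_paramIota_one : Tendsto paramIota (𝓝[<] 1) atTop := by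
  refine tendsto_atTop_mono' _ ?_ (tendsto_atTop_add_const_right _ (-π) tendsto_paramK_one)
  filter_upwards [Ico_mem_nhdsLT one_pos] with m hm using paramK_sub_pi_le_paramIota hm

theorem abs_paramW_le (hm : m ∈ Ico (0 : ℝ) 1) (hι : π ≤ paramIota m) :
    |paramW m| ≤ (√(paramIota m))⁻¹ := by
  have hιpos : 0 < paramIota m := pi_pos.trans_le hι
  have := sqrt_pos.2 hιpos
  have hK := paramK_pos hm.2
  have hnum : |m ^ 2 * paramK m - (8 - m) * paramIota m| ≤ 12 * paramIota m := by
    have hsq : m ^ 2 * paramK m ≤ paramK m :=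
      mul_le_of_le_one_left hK.le (pow_le_one₀ hm.1 hm.2.le)
    have hmul : 0 ≤ m * paramIota m := mul_nonneg hm.1 hιpos.le
    have hmul' : m * paramIota m ≤ paramIota m := mul_le_of_le_one_left hιpos.le hm.2.le
    have hsq' : 0 ≤ m ^ 2 * paramK m := by positivity
    rw [abs_le]
    constructor <;> linarith [paramK_sub_pi_le_paramIota hm]
  rw [paramW, abs_div, abs_of_pos (by positivity : 0 < 12 * √(paramIota m) ^ 3),
    div_le_iff₀ (by positivity)]
  calc |m ^ 2 * paramK m - (8 - m) * paramIota m| ≤ 12 * √(paramIota m) ^ 2 := by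
        rwa [sq_sqrt hιpos.le]
    _ = _ := by field_simp

theorem tendsto_paramW_one : Tendsto paramW (𝓝[<] 1) (𝓝 0) := by
  refine squeeze_zero_norm' ?_ (tendsto_sqrt_atTop.comp tendsto_paramIota_one).inv_tendsto_atTop
  filter_upwards [Ico_mem_nhdsLT one_pos, tendsto_paramIota_one.eventually_ge_atTop π]
    with m hm hι using abs_paramW_le hm hι

end BehaviourAtOne

section Modulus

theorem mapsTo_sq_Ioo : MapsTo (fun k : ℝ ↦ k ^ 2) (Ioo 0 1) (Ioo 0 1) := fun _ hk ↦
  ⟨pow_pos hk.1 2, pow_lt_one₀ hk.1.le hk.2 two_ne_zero⟩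

theorem strictMonoOn_sq_Ioo : StrictMonoOn (fun k : ℝ ↦ k ^ 2) (Ioo 0 1) :=
  (pow_left_strictMonoOn₀ two_ne_zero).mono fun _ hk ↦ hk.1.le

theorem tendsto_sq_nhdsGT_zero : Tendsto (fun k : ℝ ↦ k ^ 2) (𝓝[>] 0) (𝓝[>] 0) := by
  have hcont : ContinuousWithinAt (fun k : ℝ ↦ k ^ 2) (Ioi 0) 0 := by fun_prop
  simpa using hcont.tendsto_nhdsWithin (t := Ioi 0) fun k hk ↦ pow_pos hk 2

theorem tendsto_sq_nhdsLT_one : Tendsto (fun k : ℝ ↦ k ^ 2) (𝓝[<] 1) (𝓝[<] 1) := by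
  have hcont : ContinuousWithinAt (fun k : ℝ ↦ k ^ 2) (Ioo 0 1) 1 := by fun_prop
  simpa [nhdsWithin_Ioo_eq_nhdsLT] using
    hcont.tendsto_nhdsWithin (t := Ioo 0 1) mapsTo_sq_Ioo

theorem eqOn_Y22m : EqOn Y22m (fun k ↦ -√(paramIota (k ^ 2))) (Ioo 0 1) := fun k hk ↦ by
  rw [Y22m, ι₄_eq_paramIota (mapsTo_sq_Ioo hk).2]

theorem eqOn_W22m : EqOn W22m (fun k ↦ paramW (k ^ 2)) (Ioo 0 1) := fun k hk ↦ by
  have hk₂ := mapsTo_sq_Ioo hk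
  have hsub : 1 - k ^ 2 ≠ 0 := (sub_pos.2 hk₂.2).ne'
  have hι := paramIota_pos hk₂
  simp only [W22m, paramW]
  rw [ι₄_eq_paramIota hk₂.2, K_eq_paramK hk₂.2, rpow_three_div_two hι.le,
    ← mul_div_mul_right _ (12 * √(paramIota (k ^ 2)) ^ 3) hsub]
  ring

theorem strictAntiOn_Y22m : StrictAntiOn Y22m (Ioo 0 1) := by
  intro k hk l hl hkl
  rw [eqOn_Y22m hk, eqOn_Y22m hl]
  exact neg_lt_neg (sqrt_lt_sqrt (paramIota_pos (mapsTo_sq_Ioo hk)).le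
    (strictMonoOn_paramIota (mapsTo_sq_Ioo hk) (mapsTo_sq_Ioo hl) (strictMonoOn_sq_Ioo hk hl hkl)))

theorem strictMonoOn_W22m : StrictMonoOn W22m (Ioo 0 1) :=
  (strictMonoOn_paramW.comp strictMonoOn_sq_Ioo mapsTo_sq_Ioo).congr eqOn_W22m.symm

theorem tendsto_Y22m_zero : Tendsto Y22m (𝓝[>] 0) (𝓝 0) := by
  have hι : Tendsto paramIota (𝓝[>] 0) (𝓝 0) := by
    have h := (hasDerivAt_paramIota one_pos).continuousAt.tendsto
    rw [paramIota_eq_sq_mul_paramIotaQuot one_pos, zero_pow two_ne_zero, zero_mul] at h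
    exact h.mono_left nhdsWithin_le_nhds
  have hY := (hι.comp tendsto_sq_nhdsGT_zero).sqrt.neg
  rw [sqrt_zero, neg_zero] at hY
  exact hY.congr' (eqOn_Y22m.symm.eventuallyEq_of_mem (Ioo_mem_nhdsGT one_pos))

theorem tendsto_W22m_zero : Tendsto W22m (𝓝[>] 0) (𝓝 (-1 / √π)) :=
  (tendsto_paramW_zero.comp tendsto_sq_nhdsGT_zero).congr'
    (eqOn_W22m.symm.eventuallyEq_of_mem (Ioo_mem_nhdsGT one_pos))

theorem tendsto_Y22m_one : Tendsto Y22m (𝓝[<] 1) atBot :=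
  (tendsto_neg_atTop_atBot.comp (tendsto_sqrt_atTop.comp
    (tendsto_paramIota_one.comp tendsto_sq_nhdsLT_one))).congr'
    (eqOn_Y22m.symm.eventuallyEq_of_mem (Ioo_mem_nhdsLT one_pos))

theorem tendsto_W22m_one : Tendsto W22m (𝓝[<] 1) (𝓝 0) :=
  (tendsto_paramW_one.comp tendsto_sq_nhdsLT_one).congr'
    (eqOn_W22m.symm.eventuallyEq_of_mem (Ioo_mem_nhdsLT one_pos))

theorem continuousOn_Y22m : ContinuousOn Y22m (Ioo 0 1) := by
  have hι : ContinuousOn paramIota (Ioo 0 1) := fun m hm ↦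
    (hasDerivAt_paramIota hm.2).continuousAt.continuousWithinAt
  exact (hι.comp (by fun_prop) mapsTo_sq_Ioo).sqrt.neg.congr eqOn_Y22m

theorem bijOn_Y22m : BijOn Y22m (Ioo 0 1) (Iio 0) := by
  refine ⟨fun k hk ↦ ?_, strictAntiOn_Y22m.injOn, ?_⟩
  · rw [eqOn_Y22m hk]
    exact neg_lt_zero.2 (sqrt_pos.2 (paramIota_pos (mapsTo_sq_Ioo hk)))
  · exact isPreconnected_Ioo.intermediate_value_Iio (le_principal_iff.2 (Ioo_mem_nhdsLT one_pos))
      (le_principal_iff.2 (Ioo_mem_nhdsGT one_pos)) continuousOn_Y22m tendsto_Y22m_one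
      tendsto_Y22m_zero

end Modulus

/-- `Y22m` strictly decreases on `(0,1)` from `0` to `−∞`, `W22m` strictly increases
on `(0,1)` from `−1/√π` to `0`, and the parametric curve
`{(Y22m(k), W22m(k)) : k ∈ (0,1)}` is the graph of a function `W_conj^{22−}` strictly
decreasing from `0` to `−1/√π` on `(−∞, 0)`. -/
theorem curve_CN_minus_graph :
    StrictAntiOn Y22m (Set.Ioo 0 1) ∧
    StrictMonoOn W22m (Set.Ioo 0 1) ∧
    Tendsto Y22m (nhdsWithin 0 (Set.Ioi 0)) (nhds 0) ∧
    Tendsto W22m (nhdsWithin 0 (Set.Ioi 0)) (nhds (-1 / Real.sqrt π)) ∧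
    Tendsto Y22m (nhdsWithin 1 (Set.Iio 1)) atBot ∧
    Tendsto W22m (nhdsWithin 1 (Set.Iio 1)) (nhds 0) ∧
    ∃ Wconj : ℝ → ℝ,
      StrictAntiOn Wconj (Set.Iio 0) ∧
      Tendsto Wconj atBot (nhds 0) ∧
      Tendsto Wconj (nhdsWithin 0 (Set.Iio 0)) (nhds (-1 / Real.sqrt π)) ∧
      (fun k => (Y22m k, W22m k)) '' (Set.Ioo 0 1) =
        (fun Y => (Y, Wconj Y)) '' (Set.Iio 0) := by
  exact ⟨strictAntiOn_Y22m, strictMonoOn_W22m, tendsto_Y22m_zero, tendsto_W22m_zero,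
    tendsto_Y22m_one, tendsto_W22m_one, exists_strictAntiOn_graph_eq_image strictAntiOn_Y22m
      bijOn_Y22m strictMonoOn_W22m tendsto_W22m_zero tendsto_W22m_one⟩
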